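/- Let C_λ > 0 and C_q > 0. Let Q and Q̃ be m×m real symmetric positive definite matrices such that every diagonal entry of Q and of Q̃ is at least C_q and the smallest eigenvalues of Q and of Q̃ are each at least C_λ. Set R = diag(Q)^{−1/2} Q diag(Q)^{−1/2}, R̃ = diag(Q̃)^{−1/2} Q̃ diag(Q̃)^{−1/2}, and for η ∈ ℝ^m put ε = R^{1/2} η and ε̃ = R̃^{1/2} η. Then ‖ε εᵀ − ε̃ ε̃ᵀ‖_s ≤ (2√m · ‖η‖₂² / √C_λ) · ((2m+1)/C_q) · (‖Q‖_max^{1/2} + ‖Q̃‖_max^{1/2}) · ‖Q − Q̃‖_s. -/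

import Mathlib

open Matrix

/-- The Euclidean norm `‖x‖₂` on `ℝ^m`. -/
noncomputable def e2 {m : ℕ} (x : Fin m → ℝ) : ℝ := Real.sqrt (∑ i, x i ^ 2)

/-- The spectral norm of a real `m × m` matrix: the operator norm induced by the
Euclidean norm, `‖M‖_s = sup_{x ≠ 0} ‖M x‖₂ / ‖x‖₂`. -/
noncomputable def specNorm {m : ℕ} (M : Matrix (Fin m) (Fin m) ℝ) : ℝ :=
  sSup ((fun x => e2 (M *ᵥ x) / e2 x) '' {x | x ≠ 0})

/-- The correlation matrix associated with a positive definite matrix `Q`: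
`corr Q = diag(Q)^{-1/2} * Q * diag(Q)^{-1/2}`. -/
noncomputable def corr {m : ℕ} (Q : Matrix (Fin m) (Fin m) ℝ) : Matrix (Fin m) (Fin m) ℝ :=
  Matrix.diagonal (fun i => (Real.sqrt (Q i i))⁻¹) * Q *
    Matrix.diagonal (fun i => (Real.sqrt (Q i i))⁻¹)

/-- The max-norm `‖M‖_max` of a matrix: the maximum absolute value of its entries. -/
noncomputable def maxNorm {m : ℕ} (M : Matrix (Fin m) (Fin m) ℝ) : ℝ :=
  ⨆ i, ⨆ j, |M i j|

/-! Write `R = corr Q`, `R' = corr Q'`, `ε = S η` and `ε' = S' η`. From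
`ε εᵀ - ε' ε'ᵀ = ε (ε - ε')ᵀ + (ε - ε') ε'ᵀ` and `‖S‖² = ‖R‖ ≤ tr R = m`, the norm of this
difference is at most `2 √m ‖S - S'‖ ‖η‖²`.

Testing `S² - S'² = S (S - S') + (S - S') S'` on an eigenvector of `S - S'` gives
`s ‖S - S'‖ ≤ ‖R - R'‖` whenever `s ≤ S` and `0 ≤ S'`. As `R` is a congruence of `Q ≥ Cl` by
`diag(Q)^{-1/2} ≥ ‖Q‖_max^{-1/2}`, one may take `s = √(Cl / ‖Q‖_max)`.

Finally, with `D = diag(Q)^{-1/2}`, `D' = diag(Q')^{-1/2}` and `P = D⁻¹ D'`,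
`R - R' = D (Q - Q') D' + R (1 - P) - (1 - P⁻¹) R'`, where the entries `1 - √(Q i i / Q' i i)` of
`1 - P` are at most `‖Q - Q'‖ / (2 Cq)`.
-/

open scoped ComplexOrder MatrixOrder Matrix.Norms.L2Operator

section L2OpNorm

variable {𝕜 m n : Type*} [RCLike 𝕜] [Fintype m] [Fintype n]

lemma star_dotProduct_mul_self_sub_mulVec {A B : Matrix n n 𝕜}
    (hA : A.IsHermitian) (hB : B.IsHermitian) {l : ℝ} {v : n → 𝕜} (hv : (A - B) *ᵥ v = l • v) :
    star v ⬝ᵥ (A * A - B * B) *ᵥ v = l • (star v ⬝ᵥ A *ᵥ v + star v ⬝ᵥ B *ᵥ v) := by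
  have hv' : star v ᵥ* (A - B) = l • star v := by
    rw [← (hA.sub hB).eq, ← star_mulVec, hv, star_smul, star_trivial]
  have hfactor : A * A - B * B = A * (A - B) + (A - B) * B := by noncomm_ring
  rw [hfactor, add_mulVec, dotProduct_add, ← mulVec_mulVec, ← mulVec_mulVec, hv,
    dotProduct_mulVec _ (A - B), hv', mulVec_smul, dotProduct_smul, smul_dotProduct, smul_add]

variable [DecidableEq n]

lemma l2_opNorm_vecMulVec_star (x : m → 𝕜) (y : n → 𝕜) :
    ‖vecMulVec x (star y)‖ = ‖WithLp.toLp 2 x‖ * ‖WithLp.toLp 2 y‖ := by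
  rw [← InnerProductSpace.symm_toEuclideanLin_rankOne (WithLp.toLp 2 x) (WithLp.toLp 2 y),
    l2_opNorm_def, LinearEquiv.trans_apply, LinearEquiv.apply_symm_apply,
    ← InnerProductSpace.norm_rankOne (𝕜 := 𝕜)]
  rfl

lemma l2_opNorm_vecMulVec_star_self_sub_le (x y : n → 𝕜) :
    ‖vecMulVec x (star x) - vecMulVec y (star y)‖ ≤
      (‖WithLp.toLp 2 x‖ + ‖WithLp.toLp 2 y‖) * ‖WithLp.toLp 2 (x - y)‖ := by
  have hsplit : vecMulVec x (star x) - vecMulVec y (star y) =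
      vecMulVec x (star (x - y)) + vecMulVec (x - y) (star y) := by
    rw [star_sub, vecMulVec_sub, sub_vecMulVec]
    abel
  rw [hsplit]
  refine (norm_add_le _ _).trans_eq ?_
  rw [l2_opNorm_vecMulVec_star, l2_opNorm_vecMulVec_star]
  ring

lemma l2_opNorm_vecMulVec_mulVec_sub_le (S T : Matrix n n 𝕜) (v : n → 𝕜) :
    ‖vecMulVec (S *ᵥ v) (star (S *ᵥ v)) - vecMulVec (T *ᵥ v) (star (T *ᵥ v))‖ ≤
      (‖S‖ + ‖T‖) * ‖S - T‖ * ‖WithLp.toLp 2 v‖ ^ 2 := by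
  have hmul (A : Matrix n n 𝕜) : ‖WithLp.toLp 2 (A *ᵥ v)‖ ≤ ‖A‖ * ‖WithLp.toLp 2 v‖ :=
    l2_opNorm_mulVec A (WithLp.toLp 2 v)
  calc _ ≤ (‖WithLp.toLp 2 (S *ᵥ v)‖ + ‖WithLp.toLp 2 (T *ᵥ v)‖) *
        ‖WithLp.toLp 2 ((S - T) *ᵥ v)‖ := by
        rw [sub_mulVec]; exact l2_opNorm_vecMulVec_star_self_sub_le _ _
    _ ≤ (‖S‖ * ‖WithLp.toLp 2 v‖ + ‖T‖ * ‖WithLp.toLp 2 v‖) *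
        (‖S - T‖ * ‖WithLp.toLp 2 v‖) := by gcongr <;> exact hmul _
    _ = _ := by ring

lemma norm_star_dotProduct_mulVec_le (A : Matrix n n 𝕜) (v : n → 𝕜) :
    ‖star v ⬝ᵥ A *ᵥ v‖ ≤ ‖A‖ * ‖WithLp.toLp 2 v‖ ^ 2 := by
  rw [dotProduct_comm, ← EuclideanSpace.inner_toLp_toLp]
  calc _ ≤ ‖WithLp.toLp 2 v‖ * ‖WithLp.toLp 2 (A *ᵥ v)‖ := norm_inner_le_norm _ _
    _ ≤ ‖WithLp.toLp 2 v‖ * (‖A‖ * ‖WithLp.toLp 2 v‖) := by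
        gcongr; exact l2_opNorm_mulVec A (WithLp.toLp 2 v)
    _ = _ := by ring

lemma norm_apply_le_l2_opNorm (A : Matrix n n 𝕜) (i j : n) : ‖A i j‖ ≤ ‖A‖ := by
  have h := (PiLp.norm_apply_le (WithLp.toLp 2 (A *ᵥ Pi.single j 1)) i).trans
    (l2_opNorm_mulVec A (EuclideanSpace.single j 1))
  simpa using h

lemma l2_opNorm_diagonal_le {d : n → 𝕜} {c : ℝ} (hc : 0 ≤ c) (hd : ∀ i, ‖d i‖ ≤ c) :
    ‖(diagonal d : Matrix n n 𝕜)‖ ≤ c := by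
  rw [l2_opNorm_diagonal]
  exact (pi_norm_le_iff_of_nonneg hc).2 hd

lemma l2_opNorm_le_of_abs_eigenvalues_le {A : Matrix n n 𝕜} (hA : A.IsHermitian) {c : ℝ}
    (hc : 0 ≤ c) (h : ∀ i, |hA.eigenvalues i| ≤ c) : ‖A‖ ≤ c := by
  rw [hA.spectral_theorem, Unitary.conjStarAlgAut_apply, ← Unitary.coe_star,
    CStarRing.norm_mul_coe_unitary, CStarRing.norm_coe_unitary_mul]
  exact l2_opNorm_diagonal_le hc (by simpa using h)

lemma l2_opNorm_le_re_trace_of_posSemidef {A : Matrix n n 𝕜} (hA : A.PosSemidef) :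
    ‖A‖ ≤ RCLike.re A.trace := by
  have htrace : RCLike.re A.trace = ∑ i, hA.1.eigenvalues i := by
    rw [hA.1.trace_eq_sum_eigenvalues]; simp
  rw [htrace]
  refine l2_opNorm_le_of_abs_eigenvalues_le hA.1
    (Finset.sum_nonneg fun i _ => hA.eigenvalues_nonneg i) fun i => ?_
  rw [abs_of_nonneg (hA.eigenvalues_nonneg i)]
  exact Finset.single_le_sum (fun j _ => hA.eigenvalues_nonneg j) (Finset.mem_univ i)

lemma algebraMap_le_of_le_sInf_spectrum {A : Matrix n n 𝕜} (hA : A.IsHermitian) {c : ℝ}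
    (hc : c ≤ sInf (spectrum ℝ A)) : algebraMap ℝ _ c ≤ A :=
  (algebraMap_le_iff_le_spectrum (ha := hA)).2 fun _ hx =>
    hc.trans (csInf_le finite_real_spectrum.bddBelow hx)

lemma algebraMap_le_of_sq_le_sq {A : Matrix n n 𝕜} (hA : 0 ≤ A) {c : ℝ}
    (h : algebraMap ℝ _ (c ^ 2) ≤ A ^ 2) : algebraMap ℝ _ c ≤ A := by
  have hA' : IsSelfAdjoint A := .of_nonneg hA
  rw [algebraMap_le_iff_le_spectrum]
  intro x hx
  have hsq : c ^ 2 ≤ x ^ 2 :=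
    (algebraMap_le_iff_le_spectrum (ha := hA'.pow 2)).1 h _ (spectrum.pow_mem_pow A 2 hx)
  exact le_of_sq_le_sq hsq (spectrum_nonneg_of_nonneg hA hx)

lemma mul_re_dotProduct_le_of_algebraMap_le {A : Matrix n n 𝕜} {c : ℝ}
    (hA : algebraMap ℝ _ c ≤ A) (v : n → 𝕜) :
    c * RCLike.re (star v ⬝ᵥ v) ≤ RCLike.re (star v ⬝ᵥ A *ᵥ v) := by
  have h := (le_iff.1 hA).re_dotProduct_nonneg v
  rw [sub_mulVec, dotProduct_sub, map_sub, sub_nonneg, Algebra.algebraMap_eq_smul_one, smul_mulVec,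
    one_mulVec, dotProduct_smul, RCLike.smul_re] at h
  exact h

lemma add_mul_l2_opNorm_sub_le {A B : Matrix n n 𝕜} {a b : ℝ}
    (hA : algebraMap ℝ _ a ≤ A) (hB : algebraMap ℝ _ b ≤ B) :
    (a + b) * ‖A - B‖ ≤ ‖A * A - B * B‖ := by
  have hA' : A.IsHermitian := IsSelfAdjoint.of_ge hA (.algebraMap _ (.all a))
  have hB' : B.IsHermitian := IsSelfAdjoint.of_ge hB (.algebraMap _ (.all b))
  obtain hab | hab := le_or_gt (a + b) 0
  · exact (mul_nonpos_of_nonpos_of_nonneg hab (norm_nonneg _)).trans (norm_nonneg _)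
  rw [← le_div_iff₀' hab]
  refine l2_opNorm_le_of_abs_eigenvalues_le (hA'.sub hB') (by positivity) fun i => ?_
  set l := (hA'.sub hB').eigenvalues i
  set v : EuclideanSpace 𝕜 n := (hA'.sub hB').eigenvectorBasis i
  have hnorm : ‖v‖ = 1 := (hA'.sub hB').eigenvectorBasis.orthonormal.1 i
  have hone : RCLike.re (star v.ofLp ⬝ᵥ v.ofLp) = 1 := by
    rw [dotProduct_comm, ← EuclideanSpace.inner_eq_star_dotProduct, inner_self_eq_norm_sq, hnorm,
      one_pow]
  have hlower : a + b ≤ RCLike.re (star v.ofLp ⬝ᵥ A *ᵥ v + star v.ofLp ⬝ᵥ B *ᵥ v) := by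
    simpa [hone] using add_le_add (mul_re_dotProduct_le_of_algebraMap_le hA v)
      (mul_re_dotProduct_le_of_algebraMap_le hB v)
  rw [le_div_iff₀ hab]
  calc |l| * (a + b)
      ≤ |l| * ‖star v.ofLp ⬝ᵥ A *ᵥ v + star v.ofLp ⬝ᵥ B *ᵥ v‖ := by
        gcongr
        exact hlower.trans (RCLike.re_le_norm _)
    _ = ‖star v.ofLp ⬝ᵥ (A * A - B * B) *ᵥ v‖ := by
        rw [star_dotProduct_mul_self_sub_mulVec hA' hB'
          ((hA'.sub hB').mulVec_eigenvectorBasis i), norm_smul, Real.norm_eq_abs]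
    _ ≤ ‖A * A - B * B‖ := by
        simpa [hnorm] using norm_star_dotProduct_mulVec_le (A * A - B * B) v.ofLp

end L2OpNorm

section Norms

variable {m : ℕ}

lemma e2_eq_norm_toLp (x : Fin m → ℝ) : e2 x = ‖WithLp.toLp 2 x‖ := by
  simp [e2, EuclideanSpace.norm_eq]

lemma specNorm_nonneg (A : Matrix (Fin m) (Fin m) ℝ) : 0 ≤ specNorm A := by
  refine Real.sSup_nonneg ?_
  rintro _ ⟨x, -, rfl⟩
  exact div_nonneg (Real.sqrt_nonneg _) (Real.sqrt_nonneg _)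

lemma specNorm_eq_l2_opNorm (A : Matrix (Fin m) (Fin m) ℝ) : specNorm A = ‖A‖ := by
  have hpos {x : Fin m → ℝ} (hx : x ≠ 0) : 0 < e2 x := by
    rw [e2_eq_norm_toLp]
    simpa using hx
  have hub : ‖A‖ ∈ upperBounds ((fun x => e2 (A *ᵥ x) / e2 x) '' {x | x ≠ 0}) := by
    rintro _ ⟨x, hx, rfl⟩
    rw [div_le_iff₀ (hpos hx), e2_eq_norm_toLp, e2_eq_norm_toLp]
    exact l2_opNorm_mulVec A (WithLp.toLp 2 x)
  refine le_antisymm (Real.sSup_le (fun _ hy => hub hy) (norm_nonneg A)) ?_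
  rw [← l2_opNorm_toEuclideanCLM]
  refine ContinuousLinearMap.opNorm_le_bound' _ (specNorm_nonneg A) fun x hx => ?_
  have hx' : x.ofLp ≠ 0 := by simpa using norm_ne_zero_iff.1 hx
  have hle : e2 (A *ᵥ x.ofLp) / e2 x.ofLp ≤ specNorm A :=
    le_csSup ⟨_, hub⟩ ⟨x.ofLp, hx', rfl⟩
  rwa [div_le_iff₀ (hpos hx'), e2_eq_norm_toLp, e2_eq_norm_toLp] at hle

lemma abs_apply_le_maxNorm (A : Matrix (Fin m) (Fin m) ℝ) (i j : Fin m) : |A i j| ≤ maxNorm A :=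
  (le_ciSup (f := fun j => |A i j|) (Set.finite_range _).bddAbove j).trans
    (le_ciSup (f := fun i => ⨆ j, |A i j|) (Set.finite_range _).bddAbove i)

lemma apply_self_le_maxNorm (A : Matrix (Fin m) (Fin m) ℝ) (i : Fin m) : A i i ≤ maxNorm A :=
  (le_abs_self _).trans (abs_apply_le_maxNorm A i i)

end Norms

section Corr

variable {m : ℕ} {Q Q' S S' : Matrix (Fin m) (Fin m) ℝ}

/-- The normalising matrix `diag(Q)^{-1/2}`, so that `corr Q` is by definition
`invSqrtDiag Q * Q * invSqrtDiag Q`. -/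
noncomputable def invSqrtDiag (Q : Matrix (Fin m) (Fin m) ℝ) : Matrix (Fin m) (Fin m) ℝ :=
  diagonal fun i => (√(Q i i))⁻¹

/-- The diagonal matrix `diag(Q)^{1/2} diag(Q')^{-1/2}`, which turns the normalisation of `Q` into
that of `Q'`. -/
noncomputable def sqrtDiagRatio (Q Q' : Matrix (Fin m) (Fin m) ℝ) : Matrix (Fin m) (Fin m) ℝ :=
  diagonal fun i => √(Q i i) / √(Q' i i)

lemma corr_apply_self {i : Fin m} (hQ : 0 < Q i i) : corr Q i i = 1 := by
  have hsqrt : √(Q i i) ^ 2 = Q i i := Real.sq_sqrt hQ.le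
  rw [corr, mul_diagonal, diagonal_mul]
  field_simp
  exact hsqrt.symm

lemma trace_corr (hQ : ∀ i, 0 < Q i i) : (corr Q).trace = m := by
  simp [trace, corr_apply_self (hQ _)]

lemma l2_opNorm_corr_le (hQ : ∀ i, 0 < Q i i) (hR : (corr Q).PosSemidef) : ‖corr Q‖ ≤ m := by
  simpa [trace_corr hQ] using l2_opNorm_le_re_trace_of_posSemidef hR

lemma posSemidef_corr_of_mul_self_eq (hS : S.IsHermitian) (hSS : S * S = corr Q) :
    (corr Q).PosSemidef := by
  have h := posSemidef_conjTranspose_mul_self S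
  rwa [hS.eq, hSS] at h

lemma l2_opNorm_le_sqrt_of_mul_self_eq_corr (hQ : ∀ i, 0 < Q i i) (hS : S.IsHermitian)
    (hSS : S * S = corr Q) : ‖S‖ ≤ √m := by
  refine Real.le_sqrt_of_sq_le ?_
  rw [sq, ← l2_opNorm_conjTranspose_mul_self, hS.eq, hSS]
  exact l2_opNorm_corr_le hQ (posSemidef_corr_of_mul_self_eq hS hSS)

lemma isSelfAdjoint_invSqrtDiag (Q : Matrix (Fin m) (Fin m) ℝ) : IsSelfAdjoint (invSqrtDiag Q) :=
  isHermitian_diagonal _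

lemma algebraMap_inv_maxNorm_le_invSqrtDiag_mul_self (hQ : ∀ i, 0 < Q i i) :
    algebraMap ℝ _ (maxNorm Q)⁻¹ ≤ invSqrtDiag Q * invSqrtDiag Q := by
  rw [invSqrtDiag, diagonal_mul_diagonal, algebraMap_eq_diagonal, le_iff, diagonal_sub]
  refine .diagonal fun i => ?_
  rw [Pi.zero_apply, sub_nonneg, ← mul_inv, Real.mul_self_sqrt (hQ i).le]
  exact inv_anti₀ (hQ i) (apply_self_le_maxNorm Q i)

lemma algebraMap_div_maxNorm_le_corr (hQ : ∀ i, 0 < Q i i) {c : ℝ} (hc : 0 ≤ c)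
    (hcQ : algebraMap ℝ _ c ≤ Q) : algebraMap ℝ _ (c / maxNorm Q) ≤ corr Q :=
  calc algebraMap ℝ _ (c / maxNorm Q)
      = c • algebraMap ℝ _ (maxNorm Q)⁻¹ := by rw [div_eq_mul_inv, map_mul, Algebra.smul_def]
    _ ≤ c • (invSqrtDiag Q * invSqrtDiag Q) :=
        smul_le_smul_of_nonneg_left (algebraMap_inv_maxNorm_le_invSqrtDiag_mul_self hQ) hc
    _ = invSqrtDiag Q * algebraMap ℝ _ c * invSqrtDiag Q := by
        rw [← Algebra.commutes, ← Algebra.smul_def, smul_mul_assoc]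
    _ ≤ corr Q := (isSelfAdjoint_invSqrtDiag Q).conjugate_le_conjugate hcQ

lemma algebraMap_sqrt_div_maxNorm_le (hQ : ∀ i, 0 < Q i i) {c : ℝ} (hc : 0 ≤ c)
    (hcQ : algebraMap ℝ _ c ≤ Q) (hS : S.PosSemidef) (hSS : S * S = corr Q) :
    algebraMap ℝ _ (√(c / maxNorm Q)) ≤ S := by
  have hM : 0 ≤ maxNorm Q := Real.iSup_nonneg fun _ => Real.iSup_nonneg fun _ => abs_nonneg _
  refine algebraMap_le_of_sq_le_sq (nonneg_iff_posSemidef.2 hS) ?_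
  rw [Real.sq_sqrt (div_nonneg hc hM), sq, hSS]
  exact algebraMap_div_maxNorm_le_corr hQ hc hcQ

lemma l2_opNorm_sub_le_of_mul_self_eq_corr (hQ : ∀ i, 0 < Q i i) {c : ℝ} (hc : 0 < c)
    (hcQ : algebraMap ℝ _ c ≤ Q) (hS : S.PosSemidef) (hSS : S * S = corr Q) (hS' : S'.PosSemidef)
    (hSS' : S' * S' = corr Q') : ‖S - S'‖ ≤ √(maxNorm Q) / √c * ‖corr Q - corr Q'‖ := by
  obtain hm | ⟨⟨i⟩⟩ := isEmpty_or_nonempty (Fin m)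
  · rw [Subsingleton.elim S S', Subsingleton.elim (corr Q) (corr Q')]
    simp only [sub_self, norm_zero, mul_zero, le_refl]
  have hM : 0 < maxNorm Q := (hQ i).trans_le (apply_self_le_maxNorm Q i)
  have hlower : algebraMap ℝ _ (√(c / maxNorm Q)) ≤ S :=
    algebraMap_sqrt_div_maxNorm_le hQ hc.le hcQ hS hSS
  have hlower' : algebraMap ℝ _ 0 ≤ S' := by
    rw [map_zero]
    exact nonneg_iff_posSemidef.2 hS'
  have h := add_mul_l2_opNorm_sub_le hlower hlower'
  rwa [add_zero, hSS, hSS', ← le_div_iff₀' (by positivity), div_eq_inv_mul, Real.sqrt_div hc.le,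
    inv_div] at h

lemma invSqrtDiag_mul_sqrtDiagRatio (hQ : ∀ i, 0 < Q i i) (Q' : Matrix (Fin m) (Fin m) ℝ) :
    invSqrtDiag Q * sqrtDiagRatio Q Q' = invSqrtDiag Q' := by
  rw [invSqrtDiag, sqrtDiagRatio, diagonal_mul_diagonal, invSqrtDiag]
  congr 1 with i
  rw [div_eq_mul_inv, inv_mul_cancel_left₀ (Real.sqrt_pos.2 (hQ i)).ne']

lemma sqrtDiagRatio_mul_invSqrtDiag (hQ : ∀ i, 0 < Q i i) (Q' : Matrix (Fin m) (Fin m) ℝ) :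
    sqrtDiagRatio Q Q' * invSqrtDiag Q = invSqrtDiag Q' := by
  rw [← invSqrtDiag_mul_sqrtDiagRatio hQ Q']
  exact commute_diagonal _ _

lemma corr_sub_corr (hQ : ∀ i, 0 < Q i i) (hQ' : ∀ i, 0 < Q' i i) :
    corr Q - corr Q' = invSqrtDiag Q * (Q - Q') * invSqrtDiag Q' +
      corr Q * (1 - sqrtDiagRatio Q Q') - (1 - sqrtDiagRatio Q' Q) * corr Q' := by
  have hright : corr Q * sqrtDiagRatio Q Q' = invSqrtDiag Q * Q * invSqrtDiag Q' := by
    rw [← invSqrtDiag_mul_sqrtDiagRatio hQ Q', ← mul_assoc]; rfl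
  have hleft : sqrtDiagRatio Q' Q * corr Q' = invSqrtDiag Q * Q' * invSqrtDiag Q' := by
    rw [← sqrtDiagRatio_mul_invSqrtDiag hQ' Q, mul_assoc, mul_assoc, ← mul_assoc _ Q']; rfl
  rw [mul_sub, sub_mul, mul_sub, sub_mul, hright, hleft]
  noncomm_ring

lemma abs_one_sub_sqrt_div_sqrt_le {a b c : ℝ} (hc : 0 < c) (ha : c ≤ a) (hb : c ≤ b) :
    |1 - √a / √b| ≤ |a - b| / (2 * c) := by
  have hsq {x : ℝ} (hx : c ≤ x) : √x * √x = x := Real.mul_self_sqrt (hc.le.trans hx)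
  have hpos : 0 < √b := Real.sqrt_pos.2 (hc.trans_le hb)
  have hden : 2 * c ≤ √b * (√a + √b) := by
    have hab : √c * √c ≤ √b * √a := by gcongr
    rw [hsq le_rfl] at hab
    linarith [hsq hb, mul_add √b √a √b]
  have hfactor : 1 - √a / √b = (b - a) / (√b * (√a + √b)) := by
    have hba : b - a = (√b - √a) * (√a + √b) := by linear_combination hsq ha - hsq hb
    rw [hba]
    field_simp
  rw [hfactor, abs_div, abs_of_pos (by positivity : 0 < √b * (√a + √b)), abs_sub_comm]
  gcongr

lemma l2_opNorm_invSqrtDiag_le {c : ℝ} (hc : 0 < c) (hQ : ∀ i, c ≤ Q i i) :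
    ‖invSqrtDiag Q‖ ≤ (√c)⁻¹ := by
  refine l2_opNorm_diagonal_le (by positivity) fun i => ?_
  rw [Real.norm_of_nonneg (by positivity)]
  exact inv_anti₀ (Real.sqrt_pos.2 hc) (Real.sqrt_le_sqrt (hQ i))

lemma l2_opNorm_one_sub_sqrtDiagRatio_le {c : ℝ} (hc : 0 < c) (hQ : ∀ i, c ≤ Q i i)
    (hQ' : ∀ i, c ≤ Q' i i) : ‖1 - sqrtDiagRatio Q Q'‖ ≤ ‖Q - Q'‖ / (2 * c) := by
  rw [sqrtDiagRatio, ← diagonal_one, diagonal_sub]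
  refine l2_opNorm_diagonal_le (by positivity) fun i => ?_
  refine (abs_one_sub_sqrt_div_sqrt_le hc (hQ i) (hQ' i)).trans ?_
  gcongr
  exact norm_apply_le_l2_opNorm (Q - Q') i i

lemma l2_opNorm_corr_sub_corr_le {c : ℝ} (hc : 0 < c) (hQ : ∀ i, c ≤ Q i i)
    (hQ' : ∀ i, c ≤ Q' i i) :
    ‖corr Q - corr Q'‖ ≤ ((‖corr Q‖ + ‖corr Q'‖) / 2 + 1) / c * ‖Q - Q'‖ := by
  have hmid : ‖invSqrtDiag Q * (Q - Q') * invSqrtDiag Q'‖ ≤ ‖Q - Q'‖ / c :=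
    calc _ ≤ ‖invSqrtDiag Q‖ * ‖Q - Q'‖ * ‖invSqrtDiag Q'‖ := norm_mul₃_le
      _ ≤ (√c)⁻¹ * ‖Q - Q'‖ * (√c)⁻¹ := by
          gcongr
          exacts [l2_opNorm_invSqrtDiag_le hc hQ, l2_opNorm_invSqrtDiag_le hc hQ']
      _ = ‖Q - Q'‖ / c := by
          rw [mul_right_comm, ← mul_inv, Real.mul_self_sqrt hc.le, inv_mul_eq_div]
  have hright : ‖corr Q * (1 - sqrtDiagRatio Q Q')‖ ≤ ‖corr Q‖ * (‖Q - Q'‖ / (2 * c)) :=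
    norm_mul_le_of_le le_rfl (l2_opNorm_one_sub_sqrtDiagRatio_le hc hQ hQ')
  have hleft : ‖(1 - sqrtDiagRatio Q' Q) * corr Q'‖ ≤ ‖Q - Q'‖ / (2 * c) * ‖corr Q'‖ := by
    rw [norm_sub_rev Q]
    exact norm_mul_le_of_le (l2_opNorm_one_sub_sqrtDiagRatio_le hc hQ' hQ) le_rfl
  rw [corr_sub_corr (fun i => hc.trans_le (hQ i)) (fun i => hc.trans_le (hQ' i))]
  calc _ ≤ ‖Q - Q'‖ / c + ‖corr Q‖ * (‖Q - Q'‖ / (2 * c)) + ‖Q - Q'‖ / (2 * c) * ‖corr Q'‖ :=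
        norm_sub_le_of_le (norm_add_le_of_le hmid hright) hleft
    _ = _ := by field_simp; ring

lemma l2_opNorm_corr_sub_corr_le_of_posSemidef {c : ℝ} (hc : 0 < c) (hQ : ∀ i, c ≤ Q i i)
    (hQ' : ∀ i, c ≤ Q' i i) (hR : (corr Q).PosSemidef) (hR' : (corr Q').PosSemidef) :
    ‖corr Q - corr Q'‖ ≤ (m + 1) / c * ‖Q - Q'‖ := by
  refine (l2_opNorm_corr_sub_corr_le hc hQ hQ').trans ?_
  gcongr
  linarith [l2_opNorm_corr_le (fun i => hc.trans_le (hQ i)) hR,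
    l2_opNorm_corr_le (fun i => hc.trans_le (hQ' i)) hR']

end Corr

theorem stmt8_general (m : ℕ) (Cl Cq : ℝ) (hCl : 0 < Cl) (hCq : 0 < Cq)
    (Q Q' : Matrix (Fin m) (Fin m) ℝ) (hQ : Q.IsHermitian)
    (hdQ : ∀ i, Cq ≤ Q i i) (hdQ' : ∀ i, Cq ≤ Q' i i) (hlQ : Cl ≤ sInf (spectrum ℝ Q))
    (η : Fin m → ℝ) (S S' : Matrix (Fin m) (Fin m) ℝ)
    (hS : S.PosSemidef) (hSS : S * S = corr Q) (hS' : S'.PosSemidef) (hSS' : S' * S' = corr Q') :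
    specNorm (vecMulVec (S *ᵥ η) (S *ᵥ η) - vecMulVec (S' *ᵥ η) (S' *ᵥ η)) ≤
      (2 * √m * (∑ i, η i ^ 2) / √Cl) * ((m + 1) / Cq) * √(maxNorm Q) * specNorm (Q - Q') := by
  have hpos (i) : 0 < Q i i := hCq.trans_le (hdQ i)
  have hpos' (i) : 0 < Q' i i := hCq.trans_le (hdQ' i)
  have hη : ‖WithLp.toLp 2 η‖ ^ 2 = ∑ i, η i ^ 2 := by simp [EuclideanSpace.norm_sq_eq]
  have hroot : ‖S - S'‖ ≤ √(maxNorm Q) / √Cl * ‖corr Q - corr Q'‖ :=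
    l2_opNorm_sub_le_of_mul_self_eq_corr hpos hCl (algebraMap_le_of_le_sInf_spectrum hQ hlQ)
      hS hSS hS' hSS'
  have hcorr : ‖corr Q - corr Q'‖ ≤ (m + 1) / Cq * ‖Q - Q'‖ :=
    l2_opNorm_corr_sub_corr_le_of_posSemidef hCq hdQ hdQ' (posSemidef_corr_of_mul_self_eq hS.1 hSS)
      (posSemidef_corr_of_mul_self_eq hS'.1 hSS')
  rw [specNorm_eq_l2_opNorm, specNorm_eq_l2_opNorm]
  calc _ ≤ (‖S‖ + ‖S'‖) * ‖S - S'‖ * ∑ i, η i ^ 2 := by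
        simpa only [star_trivial, hη] using l2_opNorm_vecMulVec_mulVec_sub_le S S' η
    _ ≤ (√m + √m) * (√(maxNorm Q) / √Cl * ((m + 1) / Cq * ‖Q - Q'‖)) * ∑ i, η i ^ 2 := by
        gcongr
        · exact l2_opNorm_le_sqrt_of_mul_self_eq_corr hpos hS.1 hSS
        · exact l2_opNorm_le_sqrt_of_mul_self_eq_corr hpos' hS'.1 hSS'
        · exact hroot.trans (by gcongr)
    _ = _ := by ring

/-- Let `Q, Q̃` be real symmetric positive definite with diagonal entries
at least `C_q > 0` and smallest eigenvalues at least `C_λ > 0`, let `R, R̃` be the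
associated correlation matrices with positive semidefinite square roots `S, S̃`, and for
`η ∈ ℝ^m` put `ε = S η`, `ε̃ = S̃ η`.  Then
`‖ε εᵀ − ε̃ ε̃ᵀ‖_s ≤ (2√m ‖η‖₂²/√C_λ) ((2m+1)/C_q) (‖Q‖_max^{1/2} + ‖Q̃‖_max^{1/2}) ‖Q − Q̃‖_s`. -/
theorem stmt8 (m : ℕ) (hm : 0 < m) (Cl Cq : ℝ) (hCl : 0 < Cl) (hCq : 0 < Cq)
    (Q Q' : Matrix (Fin m) (Fin m) ℝ) (hQ : Q.PosDef) (hQ' : Q'.PosDef)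
    (hdQ : ∀ i, Cq ≤ Q i i) (hdQ' : ∀ i, Cq ≤ Q' i i)
    (hlQ : Cl ≤ sInf (spectrum ℝ Q)) (hlQ' : Cl ≤ sInf (spectrum ℝ Q'))
    (η : Fin m → ℝ)
    (S S' : Matrix (Fin m) (Fin m) ℝ)
    (hS : S.PosSemidef) (hSS : S * S = corr Q)
    (hS' : S'.PosSemidef) (hSS' : S' * S' = corr Q') :
    specNorm (Matrix.vecMulVec (S *ᵥ η) (S *ᵥ η) - Matrix.vecMulVec (S' *ᵥ η) (S' *ᵥ η))
      ≤ (2 * Real.sqrt m * (∑ i, η i ^ 2) / Real.sqrt Cl) * ((2 * m + 1) / Cq) *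
        (Real.sqrt (maxNorm Q) + Real.sqrt (maxNorm Q')) * specNorm (Q - Q') := by
  refine (stmt8_general m Cl Cq hCl hCq Q Q' hQ.1 hdQ hdQ' hlQ η S S' hS hSS hS' hSS').trans ?_
  gcongr
  · exact specNorm_nonneg _
  · linarith
  · exact le_add_of_nonneg_right (Real.sqrt_nonneg _)
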